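/- Let p ≥ 5 be an odd integer not divisible by 3, and set d = (p−1)/2 and ℓ = ⌊p/3⌋. Then the polynomial Φ(x,z) = S_d(z) − S_{d−1}(z) + x²·(2−z)·S_{d−ℓ−1}(z)·S_{ℓ−1−⌊ℓ/2⌋}(z)·(S_{⌊ℓ/2⌋}(z) − S_{⌊ℓ/2⌋−1}(z)) is irreducible in ℂ[x,z]. -/

import Mathlib

open Polynomial

/-- The Chebyshev-like polynomials `S n ∈ R[X]` defined by `S 0 = 1`, `S 1 = X` and
`S (n+1) = X * S n - S (n-1)` for all `n : ℤ`. -/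
noncomputable def S (R : Type*) [CommRing R] : ℤ → R[X]
  | 0 => 1
  | 1 => X
  | (n : ℕ) + 2 => X * S R (n + 1) - S R n
  | -((n : ℕ) + 1) => X * S R (-n) - S R (-n + 1)
  termination_by n => Int.natAbs n + Int.natAbs (n - 1)

/-- The variable `x` of `ℂ[x,z]`, realized as `MvPolynomial (Fin 2) ℂ`. -/
noncomputable def xP : MvPolynomial (Fin 2) ℂ := MvPolynomial.X 0

/-- The variable `z` of `ℂ[x,z]`. -/
noncomputable def zP : MvPolynomial (Fin 2) ℂ := MvPolynomial.X 1

/-!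
Put `V n = S n - S (n - 1)`, the rescaled Chebyshev polynomial of the third kind. Writing
`p = 6 * k + 1` with `k ≠ 0`, we have `d = 3 * k` and `ℓ = 2 * k`, so that
`Φ = V (3 * k) + x ^ 2 * (2 - z) * S (k - 1) ^ 2 * V k`; the case `p = 6 * k - 1` reduces to this
one through the symmetries `V (-n) = V (n - 1)` and `S (-n - 1) = -S (n - 1)`.

Regard `Φ = a + b * x ^ 2` as a polynomial in `x`. Its coefficients `a` and `b` are coprime, so it
has no nontrivial factor free of `x`. A factorization `(r * x + s) * (u * x + v)` would give
`r * v = -(s * u)`, hence `-(a * b) = (r * v) ^ 2`; but `V n` takes the value `1` at `2`, so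
`-(a * b) = (z - 2) * S (k - 1) ^ 2 * V (3 * k) * V k` vanishes to odd order at `z = 2`.
-/

namespace TwoBridge

section Irreducibility

variable {R : Type*}

theorem isPrimitive_C_add_X_sq_mul_C [CommSemiring R] {a b : R} (hab : IsRelPrime a b) :
    (C a + X ^ 2 * C b).IsPrimitive := by
  intro r hr
  rw [C_dvd_iff_dvd_coeff] at hr
  exact hab (by simpa using hr 0) (by simpa [coeff_X_pow] using hr 2)

theorem isSquare_neg_mul_of_eq_linear_mul_linear [CommRing R] {a b r s u v : R}
    (h : C a + X ^ 2 * C b = (C r * X + C s) * (C u * X + C v)) : IsSquare (-(a * b)) := by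
  have expand : (C r * X + C s) * (C u * X + C v) =
      C (r * u) * X ^ 2 + C (r * v + s * u) * X + C (s * v) := by
    simp only [map_mul, map_add]
    ring
  rw [expand] at h
  have h₀ : a = s * v := by
    simpa [-map_mul, -map_add] using congrArg (coeff · 0) h
  have h₁ : 0 = r * v + s * u := by
    simpa [-map_mul, -map_add, coeff_X_pow] using congrArg (coeff · 1) h
  have h₂ : b = r * u := by
    simpa [-map_mul, -map_add, coeff_X_pow] using congrArg (coeff · 2) h
  exact ⟨r * v, by rw [h₀, h₂]; linear_combination r * v * h₁⟩

theorem irreducible_C_add_X_sq_mul_C [CommRing R] [IsDomain R] {a b : R} (hab : IsRelPrime a b)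
    (hsq : ¬IsSquare (-(a * b))) : Irreducible (C a + X ^ 2 * C b) := by
  have hb : b ≠ 0 := by
    rintro rfl
    simp at hsq
  have hdeg : (C a + X ^ 2 * C b).natDegree = 2 := by compute_degree!
  have hprim := isPrimitive_C_add_X_sq_mul_C hab
  have isUnit_of_natDegree_eq_zero (g : R[X]) (hg : g ∣ C a + X ^ 2 * C b)
      (hg₀ : g.natDegree = 0) : IsUnit g := by
    rw [eq_C_of_natDegree_eq_zero hg₀] at hg ⊢
    exact (hprim _ hg).map C
  refine ⟨fun hu ↦ two_ne_zero (hdeg.symm.trans (natDegree_eq_zero_of_isUnit hu)),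
    fun g h hgh ↦ ?_⟩
  have hsum : g.natDegree + h.natDegree = 2 := by
    have hgh₀ : g * h ≠ 0 := hgh ▸ hprim.ne_zero
    rw [← hdeg, hgh, natDegree_mul (left_ne_zero_of_mul hgh₀) (right_ne_zero_of_mul hgh₀)]
  obtain hg | hh | ⟨hg, hh⟩ :
      g.natDegree = 0 ∨ h.natDegree = 0 ∨ g.natDegree = 1 ∧ h.natDegree = 1 := by omega
  · exact .inl (isUnit_of_natDegree_eq_zero g (Dvd.intro _ hgh.symm) hg)
  · exact .inr (isUnit_of_natDegree_eq_zero h (Dvd.intro_left _ hgh.symm) hh)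
  · rw [eq_X_add_C_of_natDegree_le_one hg.le, eq_X_add_C_of_natDegree_le_one hh.le] at hgh
    exact absurd (isSquare_neg_mul_of_eq_linear_mul_linear hgh) hsq

theorem not_isSquare_X_sub_C_mul_sq_mul [CommRing R] [IsDomain R] {a : R} {f g : R[X]}
    (hf : f ≠ 0) (hg : g.eval a ≠ 0) : ¬IsSquare ((X - C a) * f ^ 2 * g) := by
  rintro ⟨h, hh⟩
  have hg₀ : g ≠ 0 := by
    rintro rfl
    simp at hg
  have hlhs : (X - C a) * (f * f) ≠ 0 := mul_ne_zero (X_sub_C_ne_zero a) (mul_ne_zero hf hf)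
  have hrhs : h * h ≠ 0 := hh ▸ sq f ▸ mul_ne_zero hlhs hg₀
  have horder := congrArg (rootMultiplicity a) hh
  rw [sq, rootMultiplicity_mul (mul_ne_zero hlhs hg₀), rootMultiplicity_mul hlhs,
    rootMultiplicity_mul (mul_ne_zero hf hf), rootMultiplicity_mul hrhs,
    rootMultiplicity_X_sub_C_self, rootMultiplicity_eq_zero hg] at horder
  omega

theorem isCoprime_X_sub_C_of_isUnit_eval [CommRing R] {a : R} {f : R[X]}
    (h : IsUnit (f.eval a)) : IsCoprime (X - C a) f := by
  obtain ⟨q, hq⟩ := X_sub_C_dvd_sub_C_eval (a := a) (p := f)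
  rw [eq_add_of_sub_eq hq, IsCoprime.mul_add_left_right_iff]
  exact isCoprime_one_right.of_isCoprime_of_dvd_right (h.map C).dvd

end Irreducibility

section Chebyshev

variable (R : Type*) [CommRing R]

theorem S_eq_chebyshevS (n : ℤ) : S R n = Chebyshev.S R n := by
  induction n using Chebyshev.induct with
  | zero => simp [S]
  | one => simp [S]
  | add_two n ih₁ ih₂ =>
    rw [Chebyshev.S_add_two, ← ih₁, ← ih₂]
    exact S.eq_3 R n
  | neg_add_one n ih₁ ih₂ =>
    rw [Chebyshev.S_sub_one, ← ih₁, ← ih₂, ← neg_add']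
    exact S.eq_4 R n

theorem degree_chebyshevS_natCast [Nontrivial R] (n : ℕ) : (Chebyshev.S R n).degree = n := by
  induction n using Nat.twoStepInduction with
  | zero => simp
  | one => simp
  | more n ih₁ ih₂ =>
    have hlead : (X * Chebyshev.S R (n + 1)).degree = ((n + 2 : ℕ) : WithBot ℕ) := by
      rw [mul_comm, degree_mul_X]
      exact_mod_cast congrArg (· + 1) ih₂
    push_cast at ih₂ ⊢
    rw [Chebyshev.S_add_two, degree_sub_eq_left_of_degree_lt, hlead]
    · norm_cast
    · rw [hlead, ih₁]
      exact_mod_cast Nat.lt_add_of_pos_right two_pos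

theorem chebyshevS_sub_one_ne_zero [Nontrivial R] {n : ℤ} (hn : n ≠ 0) :
    Chebyshev.S R (n - 1) ≠ 0 := by
  have natCast_ne_zero (m : ℕ) : Chebyshev.S R m ≠ 0 := by
    rw [← degree_ne_bot, degree_chebyshevS_natCast]
    exact WithBot.coe_ne_bot
  obtain hn | hn := hn.lt_or_gt
  · obtain ⟨m, rfl⟩ : ∃ m : ℕ, n = -m - 1 := ⟨(-n - 1).toNat, by omega⟩
    rw [sub_sub, one_add_one_eq_two, Chebyshev.S_neg_sub_two]
    exact neg_ne_zero.2 (natCast_ne_zero m)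
  · obtain ⟨m, rfl⟩ : ∃ m : ℕ, n = m + 1 := ⟨(n - 1).toNat, by omega⟩
    rw [add_sub_cancel_right]
    exact natCast_ne_zero m

theorem chebyshevC_mul_S (m k : ℤ) :
    Chebyshev.C R k * Chebyshev.S R m = Chebyshev.S R (m + k) + Chebyshev.S R (m - k) := by
  induction k using Chebyshev.induct with
  | zero => simp [two_mul]
  | one => rw [Chebyshev.S_add_one, Chebyshev.C_one]; ring
  | add_two k ih₁ ih₂ =>
    have h₁ := Chebyshev.S_add_two R (m + k)
    have h₂ := Chebyshev.S_sub_two R (m - k)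
    have h₃ := Chebyshev.C_add_two R k
    linear_combination (norm := ring_nf) Chebyshev.S R m * h₃ - h₂ - h₁ - ih₂ + (X : R[X]) * ih₁
  | neg_add_one k ih₁ ih₂ =>
    have h₁ := Chebyshev.S_add_two R (m + (-k - 1))
    have h₂ := Chebyshev.S_sub_two R (m - (-k - 1))
    have h₃ := Chebyshev.C_add_two R (-k - 1)
    linear_combination (norm := ring_nf) Chebyshev.S R m * h₃ - h₂ - h₁ - ih₂ + (X : R[X]) * ih₁

theorem chebyshevS_sq_add_sq (n : ℤ) :
    Chebyshev.S R n ^ 2 + Chebyshev.S R (n - 1) ^ 2 -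
      X * Chebyshev.S R n * Chebyshev.S R (n - 1) = 1 := by
  have h := Chebyshev.S_sq_add_S_sq R (n - 1)
  rw [sub_add_cancel] at h
  linear_combination h

theorem chebyshevC_sq (n : ℤ) :
    Chebyshev.C R n ^ 2 = 4 + (X ^ 2 - 4) * Chebyshev.S R (n - 1) ^ 2 := by
  rw [Chebyshev.C_eq_S_sub_X_mul_S]
  linear_combination 4 * chebyshevS_sq_add_sq R n

theorem isCoprime_chebyshevS_sub_one (n : ℤ) :
    IsCoprime (Chebyshev.S R n) (Chebyshev.S R (n - 1)) :=
  ⟨Chebyshev.S R n - X * Chebyshev.S R (n - 1), Chebyshev.S R (n - 1), by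
    linear_combination chebyshevS_sq_add_sq R n⟩

/-- The Chebyshev polynomials of the third kind, rescaled like `Polynomial.Chebyshev.S` so that
`V (2 * cos θ) = cos ((n + 1 / 2) * θ) / cos (θ / 2)`. Both `Φ` and its leading coefficient in `x`
are expressed through them. -/
noncomputable def V (n : ℤ) : R[X] :=
  Chebyshev.S R n - Chebyshev.S R (n - 1)

theorem V_zero : V R 0 = 1 := by
  simp [V]

theorem V_neg (n : ℤ) : V R (-n) = V R (n - 1) := by
  rw [V, V, Chebyshev.S_neg, Chebyshev.S_neg_sub_one, sub_sub, one_add_one_eq_two]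
  ring

theorem V_eval_two (n : ℤ) : (V R n).eval 2 = 1 := by
  simp [V]

theorem chebyshevC_mul_V (m k : ℤ) :
    Chebyshev.C R k * V R m = V R (m + k) + V R (m - k) := by
  have h₁ := chebyshevC_mul_S R m k
  have h₂ := chebyshevC_mul_S R (m - 1) k
  rw [sub_add_eq_add_sub, sub_right_comm] at h₂
  rw [V, V, V]
  linear_combination h₁ - h₂

theorem V_three_mul (k : ℤ) :
    V R (3 * k) = (Chebyshev.C R k ^ 2 - 1) * V R k - Chebyshev.C R k := by
  have htwo : V R (2 * k) = Chebyshev.C R k * V R k - 1 := by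
    have h := chebyshevC_mul_V R k k
    rw [sub_self, V_zero, ← two_mul] at h
    exact eq_sub_of_add_eq h.symm
  have hthree := chebyshevC_mul_V R (2 * k) k
  rw [show 2 * k + k = 3 * k by ring, show 2 * k - k = k by ring, htwo] at hthree
  linear_combination -hthree

theorem chebyshevC_eq_two_mul_V_add (k : ℤ) :
    Chebyshev.C R k = 2 * V R k + (2 - X) * Chebyshev.S R (k - 1) := by
  rw [Chebyshev.C_eq_S_sub_X_mul_S, V]
  ring

theorem isCoprime_two_sub_X_V (k : ℤ) : IsCoprime (2 - X) (V R k) := by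
  have h : IsCoprime (X - C 2) (V R k) :=
    isCoprime_X_sub_C_of_isUnit_eval (by simp [V_eval_two])
  rw [← neg_sub, IsCoprime.neg_left_iff, ← C_ofNat]
  exact h

theorem isCoprime_chebyshevS_sub_one_V (k : ℤ) :
    IsCoprime (Chebyshev.S R (k - 1)) (V R k) := by
  have h := (isCoprime_chebyshevS_sub_one R k).symm.add_mul_left_right (-1)
  rwa [mul_neg_one, ← sub_eq_add_neg] at h

theorem isCoprime_V_three_mul_V (k : ℤ) : IsCoprime (V R (3 * k)) (V R k) := by
  have hC : IsCoprime (Chebyshev.C R k) (V R k) := by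
    rw [chebyshevC_eq_two_mul_V_add, IsCoprime.mul_add_right_left_iff]
    exact (isCoprime_two_sub_X_V R k).mul_left (isCoprime_chebyshevS_sub_one_V R k)
  rw [V_three_mul, sub_eq_add_neg, IsCoprime.mul_add_right_left_iff]
  exact hC.neg_left

theorem isCoprime_V_three_mul_chebyshevS_sub_one (k : ℤ) :
    IsCoprime (V R (3 * k)) (Chebyshev.S R (k - 1)) := by
  have hmod : V R (3 * k) = Chebyshev.S R k +
      Chebyshev.S R (k - 1) * ((X ^ 2 - 4) * Chebyshev.S R (k - 1) * V R k + X - 3) := by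
    rw [V_three_mul, chebyshevC_sq, Chebyshev.C_eq_S_sub_X_mul_S, V]
    ring
  rw [hmod, IsCoprime.add_mul_left_left_iff]
  exact isCoprime_chebyshevS_sub_one R k

theorem isCoprime_V_three_mul (k : ℤ) :
    IsCoprime (V R (3 * k)) ((2 - X) * Chebyshev.S R (k - 1) ^ 2 * V R k) :=
  .mul_right (.mul_right (isCoprime_two_sub_X_V R _).symm
    (isCoprime_V_three_mul_chebyshevS_sub_one R k).pow_right) (isCoprime_V_three_mul_V R k)

end Chebyshev

section Bivariate

variable (R : Type*)

/-- The identification of `R[z][x]` with `R[x, z]`. The swap is needed because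
`Polynomial.Bivariate.equivMvPolynomial` sends the inner variable, here `z`, to `X 0`. -/
noncomputable def bivariateEquiv [CommSemiring R] : R[X][X] ≃ₐ[R] MvPolynomial (Fin 2) R :=
  Bivariate.swap.trans (Bivariate.equivMvPolynomial R)

theorem bivariateEquiv_X [CommSemiring R] : bivariateEquiv R X = MvPolynomial.X 0 := by
  simp [bivariateEquiv, Bivariate.swap_Y]

theorem bivariateEquiv_C [CommSemiring R] (f : R[X]) :
    bivariateEquiv R (C f) = aeval (MvPolynomial.X 1) f := by
  have h : ((bivariateEquiv R).toAlgHom.comp CAlgHom) = aeval (MvPolynomial.X 1) := by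
    ext
    simp [bivariateEquiv, Bivariate.swap_X]
  exact DFunLike.congr_fun h f

theorem irreducible_V_three_mul_add [CommRing R] [IsDomain R] {k : ℤ} (hk : k ≠ 0) :
    Irreducible (C (V R (3 * k)) + X ^ 2 * C ((2 - X) * Chebyshev.S R (k - 1) ^ 2 * V R k)) := by
  refine irreducible_C_add_X_sq_mul_C (isCoprime_V_three_mul R k).isRelPrime ?_
  have hneg : -(V R (3 * k) * ((2 - X) * Chebyshev.S R (k - 1) ^ 2 * V R k)) =
      (X - C 2) * Chebyshev.S R (k - 1) ^ 2 * (V R (3 * k) * V R k) := by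
    rw [C_ofNat]
    ring
  rw [hneg]
  exact not_isSquare_X_sub_C_mul_sq_mul (chebyshevS_sub_one_ne_zero R hk) (by simp [V_eval_two])

theorem irreducible_mvPolynomial_V_three_mul_add [CommRing R] [IsDomain R] {k : ℤ} (hk : k ≠ 0) :
    Irreducible (aeval (MvPolynomial.X 1) (V R (3 * k)) +
      (MvPolynomial.X 0 : MvPolynomial (Fin 2) R) ^ 2 * (2 - MvPolynomial.X 1) *
        aeval (MvPolynomial.X 1) (Chebyshev.S R (k - 1)) ^ 2 *
        aeval (MvPolynomial.X 1) (V R k)) := by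
  convert (MulEquiv.irreducible_iff (bivariateEquiv R)).2 (irreducible_V_three_mul_add R hk) using 1
  simp only [map_add, map_mul, map_sub, map_pow, map_ofNat, bivariateEquiv_X, bivariateEquiv_C,
    aeval_X]
  ring

end Bivariate

theorem exists_eq_six_mul_add_or_sub_one {p : ℤ} (hp : 1 < |p|) (hodd : Odd p) (h3 : ¬3 ∣ p) :
    ∃ k ≠ 0, p = 6 * k + 1 ∨ p = 6 * k - 1 := by
  obtain ⟨m, rfl⟩ := hodd
  rw [lt_abs] at hp
  exact ⟨(2 * m + 2) / 6, by omega, by omega⟩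

end TwoBridge

open TwoBridge in
theorem Phi_irreducible_general {R : Type*} [CommRing R] [IsDomain R] (p : ℤ) (hp : 1 < |p|)
    (hodd : Odd p) (h3 : ¬(3 ∣ p)) :
    Irreducible (aeval (MvPolynomial.X 1) (S R ((p - 1) / 2)) -
        aeval (MvPolynomial.X 1) (S R ((p - 1) / 2 - 1)) +
      (MvPolynomial.X 0 : MvPolynomial (Fin 2) R) ^ 2 * (2 - MvPolynomial.X 1) *
        aeval (MvPolynomial.X 1) (S R ((p - 1) / 2 - p / 3 - 1)) *
        aeval (MvPolynomial.X 1) (S R (p / 3 - 1 - p / 3 / 2)) *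
        (aeval (MvPolynomial.X 1) (S R (p / 3 / 2)) -
          aeval (MvPolynomial.X 1) (S R (p / 3 / 2 - 1)))) := by
  simp only [S_eq_chebyshevS, ← map_sub]
  obtain ⟨k, hk, rfl | rfl⟩ := exists_eq_six_mul_add_or_sub_one hp hodd h3
  · convert irreducible_mvPolynomial_V_three_mul_add R hk using 1
    rw [show (6 * k + 1 - 1) / 2 = 3 * k by omega, show (6 * k + 1) / 3 = 2 * k by omega,
      show 2 * k / 2 = k by omega, show 3 * k - 2 * k - 1 = k - 1 by ring,
      show 2 * k - 1 - k = k - 1 by ring, ← V, ← V]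
    ring
  · convert irreducible_mvPolynomial_V_three_mul_add R (neg_ne_zero.2 hk) using 1
    rw [show (6 * k - 1 - 1) / 2 = 3 * k - 1 by omega, show (6 * k - 1) / 3 = 2 * k - 1 by omega,
      show (2 * k - 1) / 2 = k - 1 by omega, show 3 * k - 1 - (2 * k - 1) - 1 = k - 1 by ring,
      show 2 * k - 1 - 1 - (k - 1) = k - 1 by ring, ← V, ← V, mul_neg, V_neg, V_neg,
      Chebyshev.S_neg_sub_one, map_neg]
    ring

/-- For odd `p ≥ 5` not divisible by `3`, with `d = (p-1)/2` and `ℓ = ⌊p/3⌋`, the polynomial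
`Φ(x,z) = S_d(z) - S_{d-1}(z) + x^2 (2-z) S_{d-ℓ-1}(z) S_{ℓ-1-⌊ℓ/2⌋}(z) (S_{⌊ℓ/2⌋}(z) - S_{⌊ℓ/2⌋-1}(z))`
is irreducible in `ℂ[x,z]`. -/
theorem Phi_irreducible (p : ℤ) (hp5 : 5 ≤ p) (hodd : Odd p) (h3 : ¬(3 ∣ p)) :
    Irreducible (aeval zP (S ℂ ((p - 1) / 2)) - aeval zP (S ℂ ((p - 1) / 2 - 1)) +
      xP ^ 2 * (2 - zP) * aeval zP (S ℂ ((p - 1) / 2 - p / 3 - 1)) *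
        aeval zP (S ℂ (p / 3 - 1 - p / 3 / 2)) *
        (aeval zP (S ℂ (p / 3 / 2)) - aeval zP (S ℂ (p / 3 / 2 - 1)))) :=
  Phi_irreducible_general p (lt_abs.2 (.inl (by omega))) hodd h3
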